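/- There exists an absolute constant c > 0 such that if V = (v_1, …, v_n) is a sequence of unit vectors in ℝ² with n even, then Pr[‖σ_V‖ ≤ √2] ≥ c/n. -/

import Mathlib

/-!
The proof rests on two facts.

*Absorption.* Every point of the zonotope `{∑ x_i v_i : |x_i| ≤ 1}` of planar unit vectors lies within
`√2` of a signed sum (`exists_round_sqrt_two`). So if a bounded set `T` of the vectors has a zonotope
containing the disc of radius `ρ`, every sign pattern off `T` with signed sum of norm at most `ρ`
extends to one with signed sum of norm at most `√2`, at the cost of a constant factor `2 ^ |T|` in
probability (`goodCount_compl_le`).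

*Concentration.* An even number of unit vectors in a double sector around a line, of half-angle with
sine `β`, can be turned into one half-plane, sorted by angle and paired consecutively; the total
distance within the pairs is then at most `π β`. Up to an error of norm at most `π β`, the signed
sum is therefore a difference `X - X'` of two independent copies of the same random sum of variance
`n / 2`, and by pigeonhole `‖X - X'‖ ≤ 2 η` with probability at least `c(η) / n`
(`goodCount_sector`). For `β = 1` this applies to all unit vectors.

It remains to find `T` (`goodCount_lower`). Greedily remove disjoint pairs of vectors at an angle of
sine at least `δ = 1/16`. If `80` pairs are found, their zonotope contains a disc of radius
`80 δ = 5`, exceeding the bound `π + 2 η` for the rest. Otherwise the remaining vectors are pairwise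
`δ`-parallel, so that their signed sum is bounded by `π δ + 2 η < 4 δ`. If some vector makes with one
of them an angle of sine more than `4 δ`, these two absorb a disc of radius `4 δ`; and if not, all the
vectors lie in a double sector with `4 π δ + 2 η < √2`, and nothing needs to be absorbed.
-/

/-- The real sign `+1` or `-1` associated to a Boolean. -/
noncomputable def rsign (b : Bool) : ℝ := if b then 1 else -1

/-- The signed sum `ε₁ v₁ + ⋯ + εₙ vₙ` determined by a vector of Booleans. -/
noncomputable def signedSum {d n : ℕ} (V : Fin n → EuclideanSpace ℝ (Fin d))
    (ε : Fin n → Bool) : EuclideanSpace ℝ (Fin d) :=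
  ∑ i, rsign (ε i) • V i

/-- `probLe V r` is the probability, over independent uniform signs
`ε ∈ {−1,+1}ⁿ`, that `‖ε₁ v₁ + ⋯ + εₙ vₙ‖ ≤ r`. -/
noncomputable def probLe {d n : ℕ} (V : Fin n → EuclideanSpace ℝ (Fin d)) (r : ℝ) : ℝ :=
  (Nat.card {ε : Fin n → Bool // ‖signedSum V ε‖ ≤ r} : ℝ) / 2 ^ n

open Finset

/-- The Euclidean plane. -/
abbrev Plane := EuclideanSpace ℝ (Fin 2)

/-- The planar cross product `u₀ w₁ - u₁ w₀`, i.e. the sine of the angle from `u` to `w` when both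
are unit vectors. -/
noncomputable def cross (u w : Plane) : ℝ := u 0 * w 1 - u 1 * w 0

/-- The planar dot product, in coordinates. -/
noncomputable def dot (u w : Plane) : ℝ := u 0 * w 0 + u 1 * w 1

/-- The number of sign patterns `ε` with `‖∑ ε_i v_i‖ ≤ r`, for vectors indexed by any finite
type. -/
noncomputable def goodCount {ι : Type*} [Fintype ι] (V : ι → Plane) (r : ℝ) : ℕ :=
  Nat.card {ε : ι → Bool // ‖∑ i, rsign (ε i) • V i‖ ≤ r}

/-! ### Planar vectors and signs -/

lemma abs_rsign (b : Bool) : |rsign b| = 1 := by cases b <;> simp [rsign]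

lemma rsign_not (b : Bool) : rsign (!b) = -rsign b := by cases b <;> simp [rsign]

lemma rsign_mul (a b : Bool) : rsign a * rsign b = rsign (a == b) := by
  cases a <;> cases b <;> simp [rsign]

lemma card_subtype_le {α β : Type*} [Finite β] {p : α → Prop} {q : β → Prop}
    (f : {a // p a} → β) (hf : ∀ a, q (f a)) (hinj : Function.Injective f) :
    Nat.card {a // p a} ≤ Nat.card {b // q b} :=
  Nat.card_le_card_of_injective (fun a => (⟨f a, hf a⟩ : {b // q b}))
    fun _ _ h => hinj (congrArg Subtype.val h)

lemma goodCount_mono {ι : Type*} [Fintype ι] (V : ι → Plane) {r s : ℝ} (h : r ≤ s) :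
    goodCount V r ≤ goodCount V s :=
  card_subtype_le Subtype.val (fun ε => ε.2.trans h) Subtype.val_injective

lemma plane_norm_sq (v : Plane) : ‖v‖ ^ 2 = v 0 ^ 2 + v 1 ^ 2 := by
  simp [EuclideanSpace.norm_sq_eq, Fin.sum_univ_two]

lemma unit_sq {v : Plane} (h : ‖v‖ = 1) : v 0 ^ 2 + v 1 ^ 2 = 1 := by
  rw [← plane_norm_sq, h]; norm_num

lemma dot_sq_add_cross_sq (u w : Plane) : dot u w ^ 2 + cross u w ^ 2 = ‖u‖ ^ 2 * ‖w‖ ^ 2 := by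
  rw [plane_norm_sq, plane_norm_sq]; unfold dot cross; ring

lemma abs_cross_le (u w : Plane) : |cross u w| ≤ ‖u‖ * ‖w‖ := by
  apply abs_le_of_sq_le_sq _ (by positivity)
  nlinarith [dot_sq_add_cross_sq u w, sq_nonneg (dot u w)]

/-! ### Rounding a point of a zonotope to a signed sum -/

/-- Rounding the coefficients one at a time, choosing each sign so that the squared error does not
exceed its mean under the mean-preserving random rounding. -/
lemma exists_round {ι : Type*} [DecidableEq ι] (V : ι → Plane) (hV : ∀ i, ‖V i‖ = 1) (x : ι → ℝ)
    (hx : ∀ i, |x i| ≤ 1) (T : Finset ι) :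
    ∃ ε : ι → Bool, ‖∑ i ∈ T, (x i - rsign (ε i)) • V i‖ ^ 2 ≤ ∑ i ∈ T, (1 - x i ^ 2) := by
  induction T using Finset.induction_on with
  | empty => exact ⟨fun _ => true, by simp⟩
  | insert a s ha ih =>
    obtain ⟨ε, hε⟩ := ih
    have key : ∃ b : Bool, ‖(x a - rsign b) • V a + ∑ i ∈ s, (x i - rsign (ε i)) • V i‖ ^ 2 ≤
        (1 - x a ^ 2) + ∑ i ∈ s, (1 - x i ^ 2) := by
      set w := ∑ i ∈ s, (x i - rsign (ε i)) • V i
      have hxa := abs_le.1 (hx a)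
      have hu := unit_sq (hV a)
      have e : ∀ t : ℝ, ‖t • V a + w‖ ^ 2 = t ^ 2 + 2 * t * dot (V a) w + ‖w‖ ^ 2 := by
        intro t
        rw [plane_norm_sq, plane_norm_sq]
        simp only [PiLp.add_apply, PiLp.smul_apply, smul_eq_mul, dot]
        linear_combination t ^ 2 * hu
      by_contra! hcon
      have h1 := hcon true
      have h2 := hcon false
      rw [e] at h1 h2
      simp only [rsign, if_true, Bool.false_eq_true, if_false] at h1 h2
      -- the two rounding errors average, with weights `(1 ± x a) / 2`, to the claimed bound
      have h3 := mul_le_mul_of_nonneg_left h1.le (by linarith : 0 ≤ 1 + x a)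
      have h4 := mul_le_mul_of_nonneg_left h2.le (by linarith : 0 ≤ 1 - x a)
      nlinarith [mul_le_mul_of_nonneg_left hε (by norm_num : (0:ℝ) ≤ 2)]
    obtain ⟨b, hb⟩ := key
    refine ⟨Function.update ε a b, ?_⟩
    rw [Finset.sum_insert ha, Finset.sum_insert ha]
    have : ∑ i ∈ s, (x i - rsign (Function.update ε a b i)) • V i
        = ∑ i ∈ s, (x i - rsign (ε i)) • V i := by
      refine Finset.sum_congr rfl fun i hi => ?_
      rw [Function.update_of_ne (ne_of_mem_of_not_mem hi ha)]
    rw [this, Function.update_self]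
    exact hb

/-- Every point of the zonotope `{∑ x_i v_i : |x_i| ≤ 1}` of planar unit vectors is within `√2` of a
signed sum. Among the representations of the point, one maximizing `∑ x_i²` has at most two
coefficients outside `{-1, 1}`: three of them could be moved along a linear dependency. -/
lemma exists_round_sqrt_two {ι : Type*} [Fintype ι] [DecidableEq ι] (V : ι → Plane)
    (hV : ∀ i, ‖V i‖ = 1) (T : Finset ι) (x : ι → ℝ) (hx : ∀ i, |x i| ≤ 1) :
    ∃ ε : ι → Bool, ‖∑ i ∈ T, (x i - rsign (ε i)) • V i‖ ≤ √2 := by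
  set K : Set (ι → ℝ) := {y | (∀ i, y i ∈ Set.Icc (-1 : ℝ) 1) ∧
    ∑ i ∈ T, y i • V i = ∑ i ∈ T, x i • V i} with hK
  have hKc : IsCompact K := by
    have h1 : IsCompact (Set.univ.pi fun _ : ι => Set.Icc (-1 : ℝ) 1) :=
      isCompact_univ_pi fun _ => isCompact_Icc
    have h2 : IsClosed {y : ι → ℝ | ∑ i ∈ T, y i • V i = ∑ i ∈ T, x i • V i} :=
      isClosed_eq (by fun_prop) continuous_const
    have : K = (Set.univ.pi fun _ : ι => Set.Icc (-1 : ℝ) 1) ∩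
        {y : ι → ℝ | ∑ i ∈ T, y i • V i = ∑ i ∈ T, x i • V i} := by
      ext y; simp only [hK, Set.mem_inter_iff, Set.mem_univ_pi, Set.mem_ofPred_eq]
    rw [this]
    exact h1.inter_right h2
  obtain ⟨y, hyK, hmax⟩ := hKc.exists_isMaxOn ⟨x, fun i => abs_le.1 (hx i), rfl⟩
    (f := fun y : ι → ℝ => ∑ i ∈ T, y i ^ 2) (by fun_prop)
  obtain ⟨hy1, hy2⟩ := hyK
  set F := T.filter fun i => y i ^ 2 < 1 with hF
  have hcard : F.card ≤ 2 := by
    by_contra! hcon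
    have hli : ¬ LinearIndependent ℝ (fun i : F => V i) := by
      intro h
      have := h.fintype_card_le_finrank
      simp at this
      omega
    obtain ⟨g, hg, ⟨j, hjF⟩, hj⟩ := Fintype.not_linearIndependent_iff.1 hli
    -- extend the dependency by zero
    let a : ι → ℝ := fun i => if h : i ∈ F then g ⟨i, h⟩ else 0
    have ha0 : ∀ i, i ∉ F → a i = 0 := fun i hi => by simp [a, hi]
    have haj : a j ≠ 0 := by simpa [a, hjF] using hj
    have hFT : F ⊆ T := Finset.filter_subset _ _
    have hjT : j ∈ T := hFT hjF
    have hasum : ∑ i ∈ T, a i • V i = 0 := by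
      rw [← Finset.sum_subset hFT (fun i _ hi => by rw [ha0 i hi, zero_smul]), ← hg,
        ← Finset.sum_coe_sort F (fun i => a i • V i)]
      refine Finset.sum_congr rfl fun i _ => ?_
      simp [a]
    -- a small enough step stays in the cube
    obtain ⟨t, ht0, ht⟩ : ∃ t : ℝ, 0 < t ∧ ∀ i, |y i| + t * |a i| ≤ 1 := by
      have : ∀ i, ∀ᶠ t in nhdsWithin (0:ℝ) (Set.Ioi 0), |y i| + t * |a i| ≤ 1 := by
        intro i
        by_cases hi : i ∈ F
        · have hlt : |y i| + 0 * |a i| < 1 := by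
            have := (Finset.mem_filter.1 hi).2
            rw [zero_mul, add_zero]
            exact (sq_lt_one_iff_abs_lt_one _).1 this
          have hc : ContinuousAt (fun t : ℝ => |y i| + t * |a i|) 0 := by fun_prop
          exact nhdsWithin_le_nhds ((hc.eventually (gt_mem_nhds hlt)).mono fun _ h => h.le)
        · refine Filter.Eventually.of_forall fun t => ?_
          rw [ha0 i hi, abs_zero, mul_zero, add_zero]
          exact abs_le.2 (hy1 i)
      obtain ⟨t, h1, h2⟩ :=
        ((Filter.eventually_all.2 this).and self_mem_nhdsWithin).exists
      exact ⟨t, h2, h1⟩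
    have hmem : ∀ s : ℝ, |s| = t → (fun i => y i + s * a i) ∈ K := by
      intro s hs
      refine ⟨fun i => abs_le.1 ?_, ?_⟩
      · calc |y i + s * a i| ≤ |y i| + |s * a i| := abs_add_le _ _
          _ = |y i| + t * |a i| := by rw [abs_mul, hs]
          _ ≤ 1 := ht i
      · simp only [add_smul, mul_smul, Finset.sum_add_distrib, ← Finset.smul_sum, hasum, smul_zero,
          add_zero, hy2]
    have hexp : ∀ s : ℝ, ∑ i ∈ T, (y i + s * a i) ^ 2 =
        ∑ i ∈ T, y i ^ 2 + 2 * s * ∑ i ∈ T, y i * a i + s ^ 2 * ∑ i ∈ T, a i ^ 2 := by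
      intro s
      rw [Finset.mul_sum, Finset.mul_sum, ← Finset.sum_add_distrib, ← Finset.sum_add_distrib]
      exact Finset.sum_congr rfl fun i _ => by ring
    have h1 := hmax (hmem t (abs_of_pos ht0))
    have h2 := hmax (hmem (-t) (by rw [abs_neg, abs_of_pos ht0]))
    simp only [Set.mem_ofPred_eq, hexp] at h1 h2
    have hpos : 0 < ∑ i ∈ T, a i ^ 2 :=
      Finset.sum_pos' (fun i _ => sq_nonneg _) ⟨j, hjT, by positivity⟩
    have := mul_pos (pow_pos ht0 2) hpos
    nlinarith
  obtain ⟨ε, hε⟩ := exists_round V hV y (fun i => abs_le.2 (hy1 i)) T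
  refine ⟨ε, Real.le_sqrt_of_sq_le ?_⟩
  have heq : ∑ i ∈ T, (x i - rsign (ε i)) • V i = ∑ i ∈ T, (y i - rsign (ε i)) • V i := by
    simp only [sub_smul, Finset.sum_sub_distrib, hy2]
  rw [heq]
  refine hε.trans ?_
  calc ∑ i ∈ T, (1 - y i ^ 2) = ∑ i ∈ F, (1 - y i ^ 2) := by
        refine (Finset.sum_subset (Finset.filter_subset _ _) fun i hi hiF => ?_).symm
        have h1 : ¬ y i ^ 2 < 1 := fun h => hiF (Finset.mem_filter.2 ⟨hi, h⟩)
        have h2 : y i ^ 2 ≤ 1 := (sq_le_one_iff_abs_le_one _).2 (abs_le.2 (hy1 i))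
        linarith
    _ ≤ ∑ i ∈ F, 1 := Finset.sum_le_sum fun i _ => by nlinarith [sq_nonneg (y i)]
    _ ≤ 2 := by simpa using (by exact_mod_cast hcard : (F.card : ℝ) ≤ 2)

/-! ### Absorbing sets of vectors -/

/-- The vectors indexed by `T` absorb the disc of radius `ρ`: their zonotope contains it. -/
def AbsorbsDisc {ι : Type*} (V : ι → Plane) (T : Finset ι) (ρ : ℝ) : Prop :=
  ∀ p : Plane, ‖p‖ ≤ ρ → ∃ x : ι → ℝ, (∀ i, |x i| ≤ 1) ∧ ∑ i ∈ T, x i • V i = p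

/-- If `T` absorbs the disc of radius `ρ`, each pattern on the complement of `T` whose signed sum
has norm at most `ρ` extends to a pattern on everything whose signed sum has norm at most `√2`. -/
lemma goodCount_compl_le {ι : Type*} [Fintype ι] [DecidableEq ι] (V : ι → Plane)
    (hV : ∀ i, ‖V i‖ = 1) (T : Finset ι) (ρ : ℝ) (hT : AbsorbsDisc V T ρ) :
    goodCount (fun i : {i // i ∉ T} => V i) ρ ≤ goodCount V (√2) := by
  have key : ∀ δ : {δ : {i // i ∉ T} → Bool // ‖∑ i, rsign (δ i) • V i‖ ≤ ρ},
      ∃ ε : ι → Bool, ‖∑ i, rsign (ε i) • V i‖ ≤ √2 ∧ ∀ i : {i // i ∉ T}, ε i = δ.1 i := by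
    rintro ⟨δ, hδ⟩
    obtain ⟨x, hx, hxs⟩ := hT (-∑ i, rsign (δ i) • V i) (by rwa [norm_neg])
    obtain ⟨ε, hε⟩ := exists_round_sqrt_two V hV T x hx
    refine ⟨fun i => if h : i ∈ T then ε i else δ ⟨i, h⟩, ?_, fun i => by simp [i.2]⟩
    have h1 : ∑ i, rsign (if h : i ∈ T then ε i else δ ⟨i, h⟩) • V i =
        ∑ i ∈ T, rsign (ε i) • V i + ∑ i : {i // i ∉ T}, rsign (δ i) • V i := by
      rw [← Fintype.sum_subtype_add_sum_subtype (fun i => i ∈ T)]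
      congr 1
      · rw [Finset.sum_subtype T fun _ => Iff.rfl]
        refine Finset.sum_congr rfl fun i _ => ?_
        simp
      · refine Finset.sum_congr rfl fun i _ => ?_
        simp [i.2]
    simp only [sub_smul, Finset.sum_sub_distrib, hxs] at hε
    rw [h1, ← norm_neg, neg_add_rev, ← sub_eq_add_neg]
    exact hε
  choose f hf1 hf2 using key
  refine card_subtype_le f hf1 ?_
  intro δ γ heq
  apply Subtype.ext
  funext i
  rw [← hf2 δ i, ← hf2 γ i, heq]

/-- A transversal pair of unit vectors absorbs a disc: its parallelogram has inradius
`|cross u w|`. -/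
lemma exists_coeff_pair {u w : Plane} (hu : ‖u‖ = 1) (hw : ‖w‖ = 1) {δ : ℝ} (hδ : 0 < δ)
    (h : δ ≤ |cross u w|) (p : Plane) (hp : ‖p‖ ≤ δ) :
    ∃ s t : ℝ, |s| ≤ 1 ∧ |t| ≤ 1 ∧ s • u + t • w = p := by
  have hc : cross u w ≠ 0 := by
    intro h0; rw [h0, abs_zero] at h; linarith
  have hpos : 0 < |cross u w| := abs_pos.2 hc
  refine ⟨cross p w / cross u w, cross u p / cross u w, ?_, ?_, ?_⟩
  · rw [abs_div, div_le_one hpos]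
    have := abs_cross_le p w
    rw [hw, mul_one] at this
    linarith
  · rw [abs_div, div_le_one hpos]
    have := abs_cross_le u p
    rw [hu, one_mul] at this
    linarith
  · ext i
    fin_cases i
    all_goals
      simp
      field_simp
      unfold cross
      ring

lemma AbsorbsDisc.of_pair {ι : Type*} [DecidableEq ι] (V : ι → Plane) (hV : ∀ i, ‖V i‖ = 1)
    (T : Finset ι) {i j : ι} (hi : i ∈ T) (hj : j ∈ T) (hij : i ≠ j) {δ : ℝ} (hδ : 0 < δ)
    (h : δ ≤ |cross (V i) (V j)|) : AbsorbsDisc V T δ := by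
  intro p hp
  obtain ⟨s, t, hs, ht, hst⟩ := exists_coeff_pair (hV i) (hV j) hδ h p hp
  refine ⟨fun k => if k = i then s else if k = j then t else 0, fun k => ?_, ?_⟩
  · dsimp only
    split_ifs
    · exact hs
    · exact ht
    · simp
  · rw [← Finset.sum_subset (s₁ := {i, j})]
    · rw [Finset.sum_pair hij]
      simp [hij.symm, hst]
    · intro k hk
      simp only [Finset.mem_insert, Finset.mem_singleton] at hk
      rcases hk with rfl | rfl <;> assumption
    · intro k _ hk
      simp only [Finset.mem_insert, Finset.mem_singleton, not_or] at hk
      simp [hk.1, hk.2]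

/-- Greedily removing transversal pairs: either `k` disjoint pairs are found, and together they
absorb a disc of radius `k δ`, or the process stops with the remaining vectors pairwise almost
parallel. -/
lemma exists_absorbs_or_parallel {ι : Type*} [DecidableEq ι] (V : ι → Plane)
    (hV : ∀ i, ‖V i‖ = 1) {δ : ℝ} (hδ : 0 < δ) (k : ℕ) :
    (∃ T : Finset ι, T.card = 2 * k ∧ AbsorbsDisc V T (k * δ)) ∨
    (∃ T : Finset ι, T.card ≤ 2 * k ∧ Even T.card ∧
      ∀ i ∉ T, ∀ j ∉ T, |cross (V i) (V j)| ≤ δ) := by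
  induction k with
  | zero =>
    refine Or.inl ⟨∅, rfl, fun p hp => ⟨0, by simp, ?_⟩⟩
    simp at hp
    simp [hp]
  | succ k ih =>
    rcases ih with ⟨T, hTc, hT⟩ | ⟨T, hTc, hTe, hT⟩
    · by_cases hpar : ∀ i ∉ T, ∀ j ∉ T, |cross (V i) (V j)| ≤ δ
      · exact Or.inr ⟨T, by omega, by rw [hTc]; simp, hpar⟩
      · push Not at hpar
        obtain ⟨i, hi, j, hj, hij⟩ := hpar
        have hne : i ≠ j := by
          rintro rfl
          have : cross (V i) (V i) = 0 := by unfold cross; ring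
          rw [this, abs_zero] at hij
          linarith
        refine Or.inl ⟨insert i (insert j T), ?_, ?_⟩
        · rw [Finset.card_insert_of_notMem (by simp [hne, hi]), Finset.card_insert_of_notMem hj]
          omega
        · intro p hp
          have hk : (0:ℝ) < k + 1 := by positivity
          push_cast at hp
          have hscale : ∀ c : ℝ, 0 ≤ c → ‖(c / (k + 1)) • p‖ ≤ c * δ := by
            intro c hc
            rw [norm_smul, Real.norm_of_nonneg (by positivity)]
            calc c / (k + 1) * ‖p‖ ≤ c / (k + 1) * ((k + 1) * δ) := by gcongr
              _ = c * δ := by field_simp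
          obtain ⟨x, hx, hxs⟩ := hT (((k : ℝ) / (k + 1)) • p) (hscale k (by positivity))
          obtain ⟨s, t, hs, ht, hst⟩ := exists_coeff_pair (hV i) (hV j) hδ hij.le
            (((1 : ℝ) / (k + 1)) • p) (by simpa using hscale 1 zero_le_one)
          refine ⟨fun l => if l = i then s else if l = j then t else x l, fun l => ?_, ?_⟩
          · dsimp only
            split_ifs
            · exact hs
            · exact ht
            · exact hx l
          · rw [Finset.sum_insert (by simp [hne, hi]), Finset.sum_insert hj]
            have : ∑ l ∈ T, (if l = i then s else if l = j then t else x l) • V l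
                = ∑ l ∈ T, x l • V l := by
              refine Finset.sum_congr rfl fun l hl => ?_
              rw [if_neg (ne_of_mem_of_not_mem hl hi), if_neg (ne_of_mem_of_not_mem hl hj)]
            rw [this, hxs]
            simp only [if_true, hne.symm, if_false]
            rw [← add_assoc, hst, ← add_smul]
            convert one_smul ℝ p using 2
            field_simp
            ring
    · exact Or.inr ⟨T, by omega, hTe, hT⟩

/-! ### Concentration of a signed sum in a small box -/

lemma sum_norm_sq_signed {m : ℕ} (a : Fin m → Plane) (ha : ∀ i, ‖a i‖ = 1) :
    ∑ ε : Fin m → Bool, ‖∑ i, rsign (ε i) • a i‖ ^ 2 = m * 2 ^ m := by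
  induction m with
  | zero => simp
  | succ m ih =>
    rw [← (Fin.consEquiv fun _ => Bool).sum_comp, Fintype.sum_prod_type, Fintype.sum_bool,
      ← Finset.sum_add_distrib]
    have h : ∀ ε : Fin m → Bool,
        ‖∑ i, rsign ((Fin.consEquiv fun _ => Bool) (true, ε) i) • a i‖ ^ 2 +
        ‖∑ i, rsign ((Fin.consEquiv fun _ => Bool) (false, ε) i) • a i‖ ^ 2 =
        2 * ‖∑ i, rsign (ε i) • a i.succ‖ ^ 2 + 2 := by
      intro ε
      simp only [Fin.sum_univ_succ, Fin.consEquiv_apply, Fin.cons_zero, Fin.cons_succ]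
      set w := ∑ i, rsign (ε i) • a i.succ
      have hu := unit_sq (ha 0)
      rw [plane_norm_sq, plane_norm_sq, plane_norm_sq]
      simp [rsign]
      linear_combination 2 * hu
    rw [Finset.sum_congr rfl fun ε _ => h ε, Finset.sum_add_distrib, ← Finset.mul_sum,
      ih (fun i => a i.succ) fun i => ha _]
    simp
    ring

/-- A map from `G` to `B` has at least `|G|² / |B|` coincidences, by Cauchy–Schwarz. -/
lemma card_sq_le_card_mul_pairs {α β : Type*} [Fintype α] [DecidableEq α] [DecidableEq β]
    (G : Finset α) (B : Finset β) (f : α → β) (hf : ∀ a ∈ G, f a ∈ B) :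
    (G.card : ℝ) ^ 2 ≤ B.card * (Nat.card {q : α × α // f q.1 = f q.2} : ℝ) := by
  have hcs := sq_sum_le_card_mul_sum_sq (s := B)
    (f := fun b => ((G.filter fun a => f a = b).card : ℝ))
  have hsum : (∑ b ∈ B, ((G.filter fun a => f a = b).card : ℝ)) = G.card := by
    rw [Finset.card_eq_sum_card_fiberwise hf, Nat.cast_sum]
  rw [hsum] at hcs
  refine hcs.trans ?_
  gcongr
  rw [Nat.card_eq_fintype_card, Fintype.card_subtype]
  have : ∑ b ∈ B, (G.filter fun a => f a = b).card ^ 2 =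
      (B.biUnion fun b => (G.filter fun a => f a = b) ×ˢ (G.filter fun a => f a = b)).card := by
    rw [Finset.card_biUnion]
    · exact Finset.sum_congr rfl fun b _ => by rw [Finset.card_product, sq]
    · intro b _ b' _ hbb
      rw [Function.onFun, Finset.disjoint_left]
      intro q hq hq'
      simp only [Finset.mem_product, Finset.mem_filter] at hq hq'
      exact hbb (hq.1.2.symm.trans hq'.1.2)
  have h2 : ∑ b ∈ B, (G.filter fun a => f a = b).card ^ 2 ≤
      (univ.filter fun q : α × α => f q.1 = f q.2).card := by
    rw [this]
    apply Finset.card_le_card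
    intro q hq
    simp only [Finset.mem_biUnion, Finset.mem_product, Finset.mem_filter] at hq
    obtain ⟨b, _, h1, h2⟩ := hq
    exact Finset.mem_filter.2 ⟨mem_univ _, h1.2.trans h2.2.symm⟩
  exact_mod_cast h2

/-- By the second moment bound half of all patterns send the signed sum into a disc of radius
`√(2m)`, which is covered by `O(m / η²)` boxes of side `η`; by Cauchy–Schwarz many pairs of
patterns then land in a common box. -/
lemma card_close_pairs {m : ℕ} (a : Fin m → Plane) (ha : ∀ i, ‖a i‖ = 1) {η : ℝ} (hη : 0 < η) :
    (4 : ℝ) ^ m / ((72 + 64 / η ^ 2) * (m + 1)) ≤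
      (Nat.card {q : (Fin m → Bool) × (Fin m → Bool) //
        ‖∑ i, rsign (q.1 i) • a i - ∑ i, rsign (q.2 i) • a i‖ ≤ 2 * η} : ℝ) := by
  classical
  set X : (Fin m → Bool) → Plane := fun ε => ∑ i, rsign (ε i) • a i with hX
  set G : Finset (Fin m → Bool) := univ.filter fun ε => ‖X ε‖ ^ 2 ≤ 2 * m with hG
  -- Markov's inequality
  have hGcard : (2 : ℝ) ^ m / 2 ≤ G.card := by
    have h1 := sum_norm_sq_signed a ha
    have hsplit : (G.card : ℝ) + ((univ.filter fun ε => ¬ ‖X ε‖ ^ 2 ≤ 2 * m).card : ℝ)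
        = 2 ^ m := by
      have := Finset.card_filter_add_card_filter_not (s := (univ : Finset (Fin m → Bool)))
        (fun ε => ‖X ε‖ ^ 2 ≤ 2 * m)
      rw [Finset.card_univ, Fintype.card_fun, Fintype.card_bool, Fintype.card_fin] at this
      rw [← hG] at this
      rw [← Nat.cast_add, this]
      norm_num
    rcases Nat.eq_zero_or_pos m with rfl | hm
    · have : G = univ := by
        ext ε; simp [hG, hX]
      rw [this]; simp; norm_num
    · have h2 : ((univ.filter fun ε => ¬ ‖X ε‖ ^ 2 ≤ 2 * m).card : ℝ) * (2 * m) ≤ m * 2 ^ m := by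
        rw [← h1, ← nsmul_eq_mul]
        calc _ ≤ ∑ ε ∈ univ.filter (fun ε => ¬ ‖X ε‖ ^ 2 ≤ 2 * m), ‖X ε‖ ^ 2 := by
              apply Finset.card_nsmul_le_sum
              intro ε hε
              exact (not_le.1 (Finset.mem_filter.1 hε).2).le
          _ ≤ _ := Finset.sum_le_sum_of_subset_of_nonneg (Finset.filter_subset _ _)
              fun _ _ _ => sq_nonneg _
      have hm' : (0:ℝ) < m := by exact_mod_cast hm
      have h3 : ((univ.filter fun ε => ¬ ‖X ε‖ ^ 2 ≤ 2 * m).card : ℝ) * 2 ≤ 2 ^ m := by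
        refine le_of_mul_le_mul_left ?_ hm'
        linarith
      linarith
  set L : ℕ := ⌈√(2 * m) / η⌉₊ with hL
  have hLle : √(2 * m) / η ≤ L := Nat.le_ceil _
  have hLlt : (L : ℝ) < √(2 * m) / η + 1 := Nat.ceil_lt_add_one (by positivity)
  set B : Finset (ℤ × ℤ) := Finset.Icc (-(L : ℤ)) L ×ˢ Finset.Icc (-(L : ℤ)) L with hB
  have hBcard : (B.card : ℝ) ≤ (18 + 16 / η ^ 2) * (m + 1) := by
    have h1 : B.card = (2 * L + 1) ^ 2 := by
      rw [hB, Finset.card_product, Int.card_Icc, sq]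
      congr 1 <;> omega
    have hs : (√(2 * m) / η) ^ 2 = 2 * m / η ^ 2 := by
      rw [div_pow, Real.sq_sqrt (by positivity)]
    have h2 : (B.card : ℝ) = (2 * L + 1) ^ 2 := by rw [h1]; push_cast; ring
    have h3 : (2 * (L : ℝ) + 1) ^ 2 ≤ (2 * (√(2 * m) / η) + 3) ^ 2 := by
      exact pow_le_pow_left₀ (by positivity) (by linarith) 2
    have h4 : 0 ≤ 16 / η ^ 2 := by positivity
    have h5 : (2 * m / η ^ 2 : ℝ) * 8 = 16 / η ^ 2 * m := by ring
    have h6 : (0:ℝ) ≤ m := Nat.cast_nonneg m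
    rw [h2]
    nlinarith [sq_nonneg (2 * (√(2 * m) / η) - 3)]
  let f : (Fin m → Bool) → ℤ × ℤ := fun ε => (⌊X ε 0 / η⌋, ⌊X ε 1 / η⌋)
  have hcoord : ∀ ε ∈ G, ∀ j : Fin 2, ⌊X ε j / η⌋ ∈ Finset.Icc (-(L : ℤ)) L := by
    intro ε hε j
    have h1 : ‖X ε‖ ^ 2 ≤ 2 * m := (Finset.mem_filter.1 hε).2
    have h2 : |X ε j| ≤ √(2 * m) := by
      apply Real.abs_le_sqrt
      rw [plane_norm_sq] at h1
      fin_cases j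
      · exact le_trans (by simpa using sq_nonneg (X ε 1)) h1
      · exact le_trans (by simpa using sq_nonneg (X ε 0)) h1
    have h3 : |X ε j / η| ≤ L := by
      rw [abs_div, abs_of_pos hη]
      exact le_trans (by gcongr) hLle
    obtain ⟨h4, h5⟩ := abs_le.1 h3
    rw [Finset.mem_Icc]
    refine ⟨Int.le_floor.2 (by push_cast; exact h4), ?_⟩
    have h6 := (Int.floor_le (X ε j / η)).trans h5
    rw [← Int.cast_natCast (R := ℝ) L, Int.cast_le] at h6
    exact h6
  have hmaps : ∀ ε ∈ G, f ε ∈ B := fun ε hε =>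
    Finset.mem_product.2 ⟨hcoord ε hε 0, hcoord ε hε 1⟩
  have hcs := card_sq_le_card_mul_pairs G B f hmaps
  -- pairs in a common box are close
  have hclose : ∀ ε δ, f ε = f δ → ‖X ε - X δ‖ ≤ 2 * η := by
    intro ε δ h
    have hc : ∀ j : Fin 2, ⌊X ε j / η⌋ = ⌊X δ j / η⌋ → |X ε j - X δ j| ≤ η := by
      intro j hj
      have h1 := Int.abs_sub_lt_one_of_floor_eq_floor hj
      rw [← sub_div, abs_div, abs_of_pos hη, div_lt_one hη] at h1
      exact h1.le
    have h0 := sq_le_sq' (abs_le.1 (hc 0 (congrArg Prod.fst h))).1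
      (abs_le.1 (hc 0 (congrArg Prod.fst h))).2
    have h1 := sq_le_sq' (abs_le.1 (hc 1 (congrArg Prod.snd h))).1
      (abs_le.1 (hc 1 (congrArg Prod.snd h))).2
    refine le_of_sq_le_sq ?_ (by positivity)
    rw [plane_norm_sq]
    simp only [PiLp.sub_apply]
    nlinarith
  have hpairs : (Nat.card {q : (Fin m → Bool) × (Fin m → Bool) // f q.1 = f q.2} : ℝ) ≤
      (Nat.card {q : (Fin m → Bool) × (Fin m → Bool) // ‖X q.1 - X q.2‖ ≤ 2 * η} : ℝ) := by
    exact_mod_cast card_subtype_le Subtype.val (fun q => hclose _ _ q.2) Subtype.val_injective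
  set N : ℝ := (Nat.card {q : (Fin m → Bool) × (Fin m → Bool) // ‖X q.1 - X q.2‖ ≤ 2 * η} : ℝ)
    with hN
  have hN0 : 0 ≤ N := Nat.cast_nonneg _
  rw [div_le_iff₀ (by positivity)]
  have h1 : ((2 : ℝ) ^ m / 2) ^ 2 ≤ (18 + 16 / η ^ 2) * (m + 1) * N := by
    calc ((2 : ℝ) ^ m / 2) ^ 2 ≤ (G.card : ℝ) ^ 2 := by gcongr
      _ ≤ _ := hcs
      _ ≤ (18 + 16 / η ^ 2) * (m + 1) * N :=
          mul_le_mul hBcard hpairs (Nat.cast_nonneg _) (by positivity)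
  have h2 : (4 : ℝ) ^ m = (2 ^ m) ^ 2 := by rw [← pow_mul, mul_comm, pow_mul]; norm_num
  rw [h2]
  have h3 : (72 + 64 / η ^ 2) = 4 * (18 + 16 / η ^ 2) := by ring
  rw [h3]
  linarith

/-! ### Vectors in a common double sector -/

/-- Two families of unit vectors that are close to each other termwise: with the signs of the second
family reversed, the signed sum is the difference of two independent copies of
`∑ ε_i V (i, 0)`, up to an error of at most `D`. -/
lemma goodCount_paired {m : ℕ} (V : Fin m × Fin 2 → Plane) (hV : ∀ i, ‖V i‖ = 1) {D η : ℝ}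
    (hη : 0 < η) (hD : ∑ i, ‖V (i, 0) - V (i, 1)‖ ≤ D) :
    (4 : ℝ) ^ m / ((72 + 64 / η ^ 2) * (m + 1)) ≤ goodCount V (D + 2 * η) := by
  refine (card_close_pairs (fun i => V (i, 0)) (fun i => hV _) hη).trans ?_
  unfold goodCount
  norm_cast
  let g : (Fin m → Bool) × (Fin m → Bool) → (Fin m × Fin 2 → Bool) :=
    fun q k => if k.2 = 0 then q.1 k.1 else !q.2 k.1
  have hg : ∀ q : (Fin m → Bool) × (Fin m → Bool),
      ‖∑ i, rsign (q.1 i) • V (i, 0) - ∑ i, rsign (q.2 i) • V (i, 0)‖ ≤ 2 * η →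
      ‖∑ k, rsign (g q k) • V k‖ ≤ D + 2 * η := by
    intro q hq
    have h1 : ∑ k, rsign (g q k) • V k =
        (∑ i, rsign (q.1 i) • V (i, 0) - ∑ i, rsign (q.2 i) • V (i, 0)) +
          ∑ i, rsign (q.2 i) • (V (i, 0) - V (i, 1)) := by
      rw [Fintype.sum_prod_type, ← Finset.sum_sub_distrib, ← Finset.sum_add_distrib]
      refine Finset.sum_congr rfl fun i _ => ?_
      simp only [Fin.sum_univ_two, g, if_true, rsign_not, Fin.isValue, one_ne_zero, if_false]
      module
    have h2 : ‖∑ i, rsign (q.2 i) • (V (i, 0) - V (i, 1))‖ ≤ D := by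
      refine (norm_sum_le _ _).trans (le_trans (le_of_eq ?_) hD)
      refine Finset.sum_congr rfl fun i _ => ?_
      rw [norm_smul, Real.norm_eq_abs, abs_rsign, one_mul]
    rw [h1]
    refine (norm_add_le _ _).trans ?_
    linarith
  refine card_subtype_le (fun q => g q.1) (fun q => hg q.1 q.2) ?_
  intro q p heq
  apply Subtype.ext
  apply Prod.ext
  · funext i
    simpa [g] using congrFun heq (i, 0)
  · funext i
    simpa [g] using congrFun heq (i, 1)

/-- Reindexing the vectors and negating some of them does not create good patterns; applied backwards,
it does not destroy any. -/
lemma goodCount_reindex_le {ι κ : Type*} [Fintype ι] [Fintype κ] (V : ι → Plane) (e : κ ≃ ι)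
    (s : ι → Bool) (r : ℝ) :
    goodCount (fun k => rsign (s (e k)) • V (e k)) r ≤ goodCount V r := by
  have h : ∀ ε : κ → Bool, ∑ i, rsign (ε (e.symm i) == s i) • V i =
      ∑ k, rsign (ε k) • rsign (s (e k)) • V (e k) := by
    intro ε
    rw [← e.sum_comp]
    refine Finset.sum_congr rfl fun k _ => ?_
    rw [smul_smul, rsign_mul, e.symm_apply_apply]
  refine card_subtype_le (fun ε i => ε.1 (e.symm i) == s i) (fun ε => by rw [h]; exact ε.2) ?_
  intro ε ε' hε
  apply Subtype.ext
  funext k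
  have := congrFun hε (e k)
  simp only [e.symm_apply_apply] at this
  revert this
  cases ε.1 k <;> cases ε'.1 k <;> cases s (e k) <;> simp

lemma sum_even_gaps_le (h : ℕ → ℝ) (hh : Monotone h) (m : ℕ) :
    ∑ i ∈ range m, (h (2 * i + 1) - h (2 * i)) ≤ h (2 * m) - h 0 := by
  induction m with
  | zero => simp
  | succ m ih =>
    rw [Finset.sum_range_succ]
    have := hh (show 2 * m + 1 ≤ 2 * (m + 1) by omega)
    linarith

/-- The chord between unit vectors in the half-plane of `g` is at most the arc between them. -/
lemma norm_sub_le_arcsin {g u w : Plane} (hg : ‖g‖ = 1) (hu : ‖u‖ = 1) (hw : ‖w‖ = 1)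
    (hgu : 0 ≤ dot g u) (hgw : 0 ≤ dot g w) :
    ‖u - w‖ ≤ |Real.arcsin (cross g u) - Real.arcsin (cross g w)| := by
  have hcos : ∀ v : Plane, ‖v‖ = 1 → 0 ≤ dot g v →
      Real.cos (Real.arcsin (cross g v)) = dot g v ∧
      Real.sin (Real.arcsin (cross g v)) = cross g v := by
    intro v hv hd
    have h1 := dot_sq_add_cross_sq g v
    have h2 := abs_cross_le g v
    rw [hg, hv] at h1 h2
    rw [mul_one, abs_le] at h2
    refine ⟨?_, Real.sin_arcsin h2.1 h2.2⟩
    rw [Real.cos_arcsin, show 1 - cross g v ^ 2 = dot g v ^ 2 by linarith, Real.sqrt_sq hd]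
  obtain ⟨cu, su⟩ := hcos u hu hgu
  obtain ⟨cw, sw⟩ := hcos w hw hgw
  set α := Real.arcsin (cross g u)
  set β := Real.arcsin (cross g w)
  refine le_of_sq_le_sq ?_ (abs_nonneg _)
  rw [sq_abs]
  have h1 := Real.one_sub_sq_div_two_le_cos (x := α - β)
  rw [Real.cos_sub, cu, cw, su, sw] at h1
  have hg' := unit_sq hg
  have h2 : dot g u * dot g w + cross g u * cross g w = dot u w := by
    unfold dot cross
    linear_combination (u 0 * w 0 + u 1 * w 1) * hg'
  rw [h2] at h1
  have h3 : ‖u - w‖ ^ 2 = 2 - 2 * dot u w := by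
    rw [plane_norm_sq]
    simp only [PiLp.sub_apply, dot]
    linear_combination unit_sq hu + unit_sq hw
  rw [h3]
  linarith

lemma arcsin_le_mul {β : ℝ} (h0 : 0 ≤ β) (h1 : β ≤ 1) : Real.arcsin β ≤ Real.pi / 2 * β := by
  have h := Real.mul_le_sin (Real.arcsin_nonneg.2 h0) (Real.arcsin_le_pi_div_two β)
  rw [Real.sin_arcsin (by linarith) h1] at h
  have hpi := Real.pi_pos
  calc Real.arcsin β = Real.pi / 2 * (2 / Real.pi * Real.arcsin β) := by field_simp
    _ ≤ _ := by gcongr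

/-- An even number of unit vectors making an angle of sine at most `β` with the line of `g` have a
signed sum of norm at most `π β + 2 η` with probability at least a constant over their number.
Turned into the half-plane of `g` and sorted by angle, consecutive vectors are paired; the total arc
within the pairs is at most `2 arcsin β`. -/
lemma goodCount_sector {ι : Type*} [Fintype ι] (V : ι → Plane) (hV : ∀ i, ‖V i‖ = 1)
    {m : ℕ} (hm : Fintype.card ι = m * 2) {g : Plane} (hg : ‖g‖ = 1) {β η : ℝ} (hβ1 : β ≤ 1)
    (hβ0 : 0 ≤ β) (hη : 0 < η) (hβ : ∀ i, |cross g (V i)| ≤ β) :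
    (2 : ℝ) ^ Fintype.card ι / ((72 + 64 / η ^ 2) * (m + 1)) ≤
      goodCount V (Real.pi * β + 2 * η) := by
  classical
  let s : ι → Bool := fun i => decide (0 ≤ dot g (V i))
  let W : ι → Plane := fun i => rsign (s i) • V i
  have hW : ∀ i, ‖W i‖ = 1 := fun i => by
    simp only [W, norm_smul, Real.norm_eq_abs, abs_rsign, hV, mul_one]
  have hdot : ∀ i, 0 ≤ dot g (W i) := by
    intro i
    have : dot g (W i) = rsign (s i) * dot g (V i) := by
      simp only [W, dot, PiLp.smul_apply, smul_eq_mul]; ring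
    rw [this]
    by_cases h : 0 ≤ dot g (V i)
    · simp [s, h, rsign]
    · simp only [s, h, rsign, decide_false, Bool.false_eq_true, if_false]
      linarith
  have hcross : ∀ i, |cross g (W i)| ≤ β := by
    intro i
    have : cross g (W i) = rsign (s i) * cross g (V i) := by
      simp only [W, cross, PiLp.smul_apply, smul_eq_mul]; ring
    rw [this, abs_mul, abs_rsign, one_mul]
    exact hβ i
  let e₀ : Fin (m * 2) ≃ ι := (Fintype.equivFinOfCardEq hm).symm
  let θ : ι → ℝ := fun i => Real.arcsin (cross g (W i))
  have hθ : ∀ i, -Real.arcsin β ≤ θ i ∧ θ i ≤ Real.arcsin β := by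
    intro i
    obtain ⟨h1, h2⟩ := abs_le.1 (hcross i)
    refine ⟨?_, Real.monotone_arcsin h2⟩
    rw [← Real.arcsin_neg]
    exact Real.monotone_arcsin h1
  let e₁ : Fin (m * 2) ≃ ι := (Tuple.sort (θ ∘ e₀)).trans e₀
  have hmono : Monotone (θ ∘ e₁) := Tuple.monotone_sort (θ ∘ e₀)
  let e : Fin m × Fin 2 ≃ ι := finProdFinEquiv.trans e₁
  -- the sorted angles, continued by the upper bound
  let h : ℕ → ℝ := fun k => if hk : k < m * 2 then θ (e₁ ⟨k, hk⟩) else Real.arcsin β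
  have hh : Monotone h := by
    intro k l hkl
    simp only [h]
    split_ifs with h1 h2 h2
    · exact hmono (by simpa using hkl)
    · exact (hθ _).2
    · omega
    · exact le_rfl
  have hh0 : ∀ i : Fin m, h (2 * i) = θ (e (i, 0)) := by
    intro i
    have : 2 * (i : ℕ) < m * 2 := by omega
    simp only [h, this, dif_pos, e, Equiv.trans_apply]
    congr 2
    ext
    simp [finProdFinEquiv]
  have hh1 : ∀ i : Fin m, h (2 * i + 1) = θ (e (i, 1)) := by
    intro i
    have : 2 * (i : ℕ) + 1 < m * 2 := by omega
    simp only [h, this, dif_pos, e, Equiv.trans_apply]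
    congr 2
    ext
    simp [finProdFinEquiv]
    omega
  have hlow : -Real.arcsin β ≤ h 0 := by
    simp only [h]
    split_ifs
    · exact (hθ _).1
    · linarith [Real.arcsin_nonneg.2 hβ0]
  have hhigh : h (2 * m) = Real.arcsin β := by
    simp [h, mul_comm]
  have hD : ∑ i, ‖W (e (i, 0)) - W (e (i, 1))‖ ≤ Real.pi * β := by
    calc ∑ i, ‖W (e (i, 0)) - W (e (i, 1))‖ ≤
        ∑ i : Fin m, (h (2 * i + 1) - h (2 * i)) := by
          refine Finset.sum_le_sum fun i _ => ?_
          refine (norm_sub_le_arcsin hg (hW _) (hW _) (hdot _) (hdot _)).trans ?_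
          have := hh (show 2 * (i : ℕ) ≤ 2 * i + 1 by omega)
          change |θ _ - θ _| ≤ _
          rw [← hh0, ← hh1, abs_sub_comm, abs_of_nonneg (by linarith)]
      _ = ∑ i ∈ range m, (h (2 * i + 1) - h (2 * i)) :=
          Fin.sum_univ_eq_sum_range (fun i => h (2 * i + 1) - h (2 * i)) m
      _ ≤ h (2 * m) - h 0 := sum_even_gaps_le h hh m
      _ ≤ Real.pi * β := by linarith [arcsin_le_mul hβ0 hβ1]
  have h1 := goodCount_paired (fun k => W (e k)) (fun k => hW _) hη hD
  have h2 := goodCount_reindex_le V e s (Real.pi * β + 2 * η)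
  have h3 : (2 : ℝ) ^ Fintype.card ι = 4 ^ m := by
    rw [hm, mul_comm, pow_mul]; norm_num
  rw [h3]
  exact h1.trans (by exact_mod_cast h2)

/-! ### Choice of the absorbing set -/

/-- The reduction in quantitative form: an absorbing set of at most `162` vectors whose complement
lies in a double sector of small enough width. Boxes of side `η = 1/64` are used, and
`262216 = 72 + 64 / η²`. -/
lemma goodCount_of_absorbs {m : ℕ} (V : Fin (2 * m) → Plane) (hV : ∀ i, ‖V i‖ = 1)
    (T : Finset (Fin (2 * m))) (hTc : T.card ≤ 162) (hTe : Even T.card) {ρ : ℝ}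
    (hT : AbsorbsDisc V T ρ) {g : Plane} (hg : ‖g‖ = 1) {β : ℝ} (hβ1 : β ≤ 1) (hβ0 : 0 ≤ β)
    (hβ : ∀ i ∉ T, |cross g (V i)| ≤ β) (hρ : Real.pi * β + 1 / 32 ≤ ρ) :
    (2 : ℝ) ^ (2 * m) / (2 ^ 162 * 262216 * (m + 1)) ≤ goodCount V (√2) := by
  obtain ⟨t, ht⟩ := hTe
  have hTle : T.card ≤ 2 * m := by simpa using T.card_le_univ
  have hcard : Fintype.card {i // i ∉ T} = 2 * m - T.card := by
    rw [Fintype.card_subtype_compl]; simp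
  have h1 := goodCount_sector (fun i : {i // i ∉ T} => V i) (fun i => hV _)
    (m := m - t) (by omega) hg hβ1 hβ0 (η := 1 / 64) (by norm_num) (fun i => hβ i i.2)
  have h2 : goodCount (fun i : {i // i ∉ T} => V i) (Real.pi * β + 2 * (1 / 64)) ≤
      goodCount (fun i : {i // i ∉ T} => V i) ρ :=
    goodCount_mono _ (by linarith)
  have h3 := h2.trans (goodCount_compl_le V hV T ρ hT)
  have h4 : ((goodCount (fun i : {i // i ∉ T} => V i) (Real.pi * β + 2 * (1 / 64)) : ℕ) : ℝ) ≤
      goodCount V (√2) := by exact_mod_cast h3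
  refine le_trans ?_ (h1.trans h4)
  have h5 : ((m - t : ℕ) : ℝ) ≤ m := by exact_mod_cast Nat.sub_le m t
  have h6 : (2 : ℝ) ^ (2 * m) ≤ 2 ^ Fintype.card {i // i ∉ T} * 2 ^ 162 := by
    rw [← pow_add]
    exact pow_le_pow_right₀ (by norm_num) (by omega)
  have h7 : (72 + 64 / (1 / 64 : ℝ) ^ 2) = 262216 := by norm_num
  rw [h7]
  calc (2 : ℝ) ^ (2 * m) / (2 ^ 162 * 262216 * (m + 1))
      ≤ (2 ^ Fintype.card {i // i ∉ T} * 2 ^ 162) / (2 ^ 162 * 262216 * ((m : ℝ) + 1)) := by gcongr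
    _ = 2 ^ Fintype.card {i // i ∉ T} / (262216 * ((m : ℝ) + 1)) := by
        field_simp
    _ ≤ _ := by gcongr

/-- With `δ = 1/16`, either `80` disjoint pairs of vectors at an angle of sine at least `δ` absorb a
disc of radius `5 > π`; or all but at most `160` vectors are pairwise `δ`-parallel. In the second
case one vector at an angle of sine more than `4δ` to them absorbs a disc of radius `4δ > π δ`
jointly with one of them, and if there is none, all the vectors lie in a narrow double sector. -/
lemma goodCount_lower {m : ℕ} (V : Fin (2 * m) → Plane) (hV : ∀ i, ‖V i‖ = 1) :
    (2 : ℝ) ^ (2 * m) / (2 ^ 162 * 262216 * (m + 1)) ≤ goodCount V (√2) := by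
  have hpi := Real.pi_lt_d2
  rcases exists_absorbs_or_parallel V hV (δ := 1 / 16) (by norm_num) 80 with
    ⟨T, hTc, hT⟩ | ⟨T, hTc, hTe, hT⟩
  · refine goodCount_of_absorbs V hV T (by omega) ⟨80, by omega⟩ hT
      (g := EuclideanSpace.single 0 1) (by simp) le_rfl zero_le_one (fun i _ => ?_) ?_
    · refine (abs_cross_le _ _).trans ?_
      simp [hV]
    · norm_num
      linarith
  · by_cases hne : ∃ i₀, i₀ ∉ T
    · obtain ⟨i₀, hi₀⟩ := hne
      by_cases hall : ∀ j, |cross (V i₀) (V j)| ≤ 1 / 4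
      · have h1 := goodCount_sector V hV (m := m) (by simp [mul_comm]) (hV i₀) (by norm_num)
          (by norm_num) (η := 1 / 64) (by norm_num) hall
        have h2 : goodCount V (Real.pi * (1 / 4) + 2 * (1 / 64)) ≤ goodCount V (√2) := by
          have hs : Real.pi * (1 / 4) + 2 * (1 / 64) ≤ √2 := by
            refine Real.le_sqrt_of_sq_le ?_
            nlinarith [Real.pi_pos]
          exact goodCount_mono V hs
        refine le_trans ?_ (h1.trans (by exact_mod_cast h2))
        rw [Fintype.card_fin]
        have h7 : (72 + 64 / (1 / 64 : ℝ) ^ 2) = 262216 := by norm_num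
        rw [h7]
        gcongr
        norm_num
      · push Not at hall
        obtain ⟨j, hj⟩ := hall
        have hjT : j ∈ T := by
          by_contra hjT
          have := hT i₀ hi₀ j hjT
          linarith
        have hj₀ : i₀ ≠ j := fun h => hi₀ (h ▸ hjT)
        -- by parity the complement of `T` has a second element
        obtain ⟨i₁, hi₁, hi₁₀⟩ : ∃ i₁, i₁ ∉ T ∧ i₁ ≠ i₀ := by
          by_contra! hcon
          have : insert i₀ T = univ := by
            ext i
            simp only [Finset.mem_insert, Finset.mem_univ, iff_true]
            by_cases hi : i ∈ T
            · exact Or.inr hi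
            · exact Or.inl (hcon i hi)
          have hc := congrArg Finset.card this
          rw [Finset.card_insert_of_notMem hi₀, Finset.card_univ, Fintype.card_fin] at hc
          obtain ⟨t, ht⟩ := hTe
          omega
        have hcard : (insert i₁ (insert i₀ T)).card = T.card + 2 := by
          rw [Finset.card_insert_of_notMem (by simp [hi₁, hi₁₀]),
            Finset.card_insert_of_notMem hi₀]
        refine goodCount_of_absorbs V hV (insert i₁ (insert i₀ T)) (by omega) ?_
          (AbsorbsDisc.of_pair V hV _ (i := i₀) (j := j) (by simp) (by simp [hjT]) hj₀
            (δ := 1 / 4) (by norm_num) hj.le)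
          (hV i₀) (β := 1 / 16) (by norm_num) (by norm_num) (fun i hi => ?_) (by linarith)
        · rw [hcard]; exact hTe.add even_two
        · simp only [Finset.mem_insert, not_or] at hi
          exact hT i₀ hi₀ i hi.2.2
    · -- at most `160` vectors in all: a single good pattern suffices
      push Not at hne
      have hTu : T = univ := Finset.eq_univ_iff_forall.2 hne
      have hm : 2 * m ≤ 160 := by
        rw [hTu, Finset.card_univ, Fintype.card_fin] at hTc
        omega
      obtain ⟨ε, hε⟩ := exists_round_sqrt_two V hV univ 0 (by simp)
      have h1 : 1 ≤ goodCount V (√2) := by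
        have : Nonempty {ε : Fin (2 * m) → Bool // ‖∑ i, rsign (ε i) • V i‖ ≤ √2} :=
          ⟨⟨ε, by simpa [neg_smul, Finset.sum_neg_distrib] using hε⟩⟩
        exact Nat.card_pos
      have h2 : (1 : ℝ) ≤ goodCount V (√2) := by exact_mod_cast h1
      refine le_trans ?_ h2
      rw [div_le_one (by positivity)]
      have h3 : (2 : ℝ) ^ (2 * m) ≤ 2 ^ 162 := pow_le_pow_right₀ (by norm_num) (by omega)
      have h4 : (0 : ℝ) ≤ m := Nat.cast_nonneg m
      nlinarith

/-- Theorem 3.10: there is an absolute constant `c > 0` such that if `V = (v₁, …, vₙ)` is a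
sequence of unit vectors in `ℝ²` with `n = 2m` even, then `Pr[‖σ_V‖ ≤ √2] ≥ c / n`. -/
theorem stmt_17 :
    ∃ c : ℝ, 0 < c ∧
      ∀ m : ℕ, ∀ V : Fin (2 * m) → EuclideanSpace ℝ (Fin 2),
        (∀ i, ‖V i‖ = 1) →
        c / ((2 * m : ℕ) : ℝ) ≤ probLe V (Real.sqrt 2) := by
  refine ⟨1 / (2 ^ 162 * 262216), by positivity, fun m V hV => ?_⟩
  have h := goodCount_lower V hV
  have hp : probLe V (√2) = (goodCount V (√2) : ℝ) / 2 ^ (2 * m) := rfl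
  rw [hp, le_div_iff₀ (by positivity)]
  refine le_trans ?_ h
  rcases Nat.eq_zero_or_pos m with rfl | hm
  · simp
  · have hm' : (1 : ℝ) ≤ m := by exact_mod_cast hm
    push_cast
    rw [div_div, div_mul_eq_mul_div, one_mul]
    gcongr
    linarith
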